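/- arXiv:1812.11576 — 4 statements merged into one kernel-verified Lean document; each statement's English description precedes it below -/
import Mathlib

section
/- Let B and B̄ be as defined in the context. Then Bᵗ · B̄ = N^m · I_r in the ring of r × r matrices over the polynomial ring F[N]. (Lemma 3.32 of the paper.) -/
open Matrix

/-- The index set appearing in condition (3.12) of the paper. -/
def siegelIdxSet (m : ℕ) (k : ℕ → ℕ) (u : ℕ) : Set (ℕ × ℕ × ℕ) :=
  {p | u ≤ p.1 ∧ p.1 ≤ m - 1 ∧ p.1 + 2 ≤ p.2.1 ∧ p.2.1 ≤ m + 1 ∧ 1 ≤ p.2.2 ∧ p.2.2 ≤ k p.2.1}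

/-- Condition (3.12) of the paper. -/
def IsSiegelBasis (F : Type*) [Field F] {V : Type*} [AddCommGroup V] [Module F V]
    (m : ℕ) (k : ℕ → ℕ) (N : Module.End F V) (l : ℕ → ℕ → V) : Prop :=
  ∀ u : ℕ, u < m →
    LinearIndependent F
      (fun p : siegelIdxSet m k u => (N ^ p.val.1) (l p.val.2.1 p.val.2.2)) ∧
    Submodule.span F
        ((fun p : ℕ × ℕ × ℕ => (N ^ p.1) (l p.2.1 p.2.2)) '' siegelIdxSet m k u) =
      LinearMap.range (N ^ u)

/-- The matrices `P_{u,v,y,z}` (entries `P u v y z i j`) satisfy the defining relation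
(3.20) of the paper. -/
def SatisfiesP {F : Type*} [Field F] {V : Type*} [AddCommGroup V] [Module F V]
    (m : ℕ) (k : ℕ → ℕ) (N : Module.End F V) (l : ℕ → ℕ → V)
    (P : ℕ → ℕ → ℕ → ℕ → ℕ → ℕ → F) : Prop :=
  ∀ u ∈ Finset.Icc 1 (m + 1), ∀ v ∈ Finset.Icc 0 (m - 1), ∀ i ∈ Finset.Icc 1 (k u),
    (N ^ v) (l u i) =
      -∑ z ∈ Finset.Icc v (m - 1), ∑ y ∈ Finset.Icc (z + 2) (m + 1),
        ∑ j ∈ Finset.Icc 1 (k y), P u v y z i j • (N ^ z) (l y j)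

/-- Row index Finset of a skew block matrix: pairs `⟨α, i⟩` with `1 ≤ α ≤ m+1`,
`1 ≤ i ≤ k α`. -/
def blockIdx (m : ℕ) (k : ℕ → ℕ) : Finset ((_ : ℕ) × ℕ) :=
  (Finset.Icc 1 (m + 1)).sigma fun u => Finset.Icc 1 (k u)

/-- Column index Finset of a skew block matrix: pairs `⟨β, j⟩` with `1 ≤ β ≤ m+1`,
`1 ≤ j ≤ k (m+2-β)`. -/
def dualBlockIdx (m : ℕ) (k : ℕ → ℕ) : Finset ((_ : ℕ) × ℕ) :=
  (Finset.Icc 1 (m + 1)).sigma fun b => Finset.Icc 1 (k (m + 2 - b))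

/-- Entry of the skew block matrix `C_t` at row `a = ⟨α, i⟩`, column `b = ⟨β, j⟩`:
the `(α,β)`-th block of `C_t` is `(S_{m+2-β, m+1-β, α, t})ᵗ` whenever this Siegel matrix
is defined, the `(t+1, m+1-t)`-th block is the identity, and all other blocks are `0`.
Here `S_{u,u-1,y,z} = P_{u,u-1,y,z}`. -/
def Centry {F : Type*} [Field F] (m : ℕ) (P : ℕ → ℕ → ℕ → ℕ → ℕ → ℕ → F)
    (t : ℕ) (a b : (_ : ℕ) × ℕ) : F :=
  if a.1 = t + 1 ∧ b.1 = m + 1 - t then (if a.2 = b.2 then 1 else 0)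
  else if 2 ≤ b.1 ∧ m + 1 - t ≤ b.1 ∧ t + 1 ≤ m ∧ t + 2 ≤ a.1 then
    P (m + 2 - b.1) (m + 1 - b.1) a.1 t b.2 a.2
  else 0

/-- Entry of the skew block matrix `D_t` (denoted `C̄_t` in the paper) at row `a = ⟨α, i⟩`,
column `b = ⟨β, j⟩`: for `t ≤ m-1` the `(α,β)`-th block is `-P_{α, m-1-t, m+2-β, m-β}`
for `β ≤ t+1` and `0` for `β > t+1`; `D_m` has the identity as `(1, m+1)`-th block and all
other blocks `0`. -/
def Dentry {F : Type*} [Field F] (m : ℕ) (P : ℕ → ℕ → ℕ → ℕ → ℕ → ℕ → F)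
    (t : ℕ) (a b : (_ : ℕ) × ℕ) : F :=
  if t = m then (if a.1 = 1 ∧ b.1 = m + 1 ∧ a.2 = b.2 then 1 else 0)
  else if b.1 ≤ t + 1 then -P a.1 (m - 1 - t) (m + 2 - b.1) (m - b.1) a.2 b.2
  else 0

/-- The matrix `B = Σ_{t=0}^{m} C_t N^t ∈ M_r(F[N])` (with `N` the polynomial variable). -/
noncomputable def Bmat {F : Type*} [Field F] (m : ℕ) (k : ℕ → ℕ)
    (P : ℕ → ℕ → ℕ → ℕ → ℕ → ℕ → F) :
    Matrix {p // p ∈ blockIdx m k} {p // p ∈ dualBlockIdx m k} (Polynomial F) :=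
  Matrix.of fun a b =>
    ∑ t ∈ Finset.range (m + 1), Polynomial.C (Centry m P t a.1 b.1) * Polynomial.X ^ t

/-- The matrix `B̄ = Σ_{t=0}^{m} D_t N^t ∈ M_r(F[N])`. -/
noncomputable def Bbarmat {F : Type*} [Field F] (m : ℕ) (k : ℕ → ℕ)
    (P : ℕ → ℕ → ℕ → ℕ → ℕ → ℕ → F) :
    Matrix {p // p ∈ blockIdx m k} {p // p ∈ dualBlockIdx m k} (Polynomial F) :=
  Matrix.of fun a b =>
    ∑ t ∈ Finset.range (m + 1), Polynomial.C (Dentry m P t a.1 b.1) * Polynomial.X ^ t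

/-!
Regard `V` as an `F[X]`-module on which `X` acts by `N`. Each column `b'` of `B` is a relation
`∑_a B_{a,b'} l_a = 0`, by (3.20) or by `N^m = 0`. Outside its last block column, `B̄` is a matrix
of truncated resolvents, `B̄_{a,b} = ρ_m(l_a)` with `ρ_n(v) = ∑_{t < n} φ(N^{n-1-t} v) X^t`, where
`φ` is the coordinate functional of one basis vector `N^w l_{w+2,j}` of `V`.

As `X^t ρ_m(v) = ρ_m(N^t v) + X^m ρ_t(v)`, the relation given by `b'` reduces
`∑_a B_{a,b'} ρ_m(l_a)` to `X^m ∑_t ρ_t(∑_a (C_t)_{a,b'} l_a)`. The inner sum involves only vectors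
`l_y` with `y > t`, whose images under `N^i`, `i < t`, are basis vectors; only the identity block of
`C_t` can produce `N^w l_{w+2,j}`, and it does so exactly when `b' = b`.

The last block column of `B̄` is `X^m` times the identity in the first block row, zero elsewhere;
the first block row of `B` is the identity in the last block column, zero elsewhere.
-/

open Polynomial Finset

section TruncatedResolvent

variable {R V : Type*} [CommSemiring R] [AddCommMonoid V] [Module R V]

/-- The truncated resolvent `φ ((X^n - N^n) / (X - N) v) = ∑_{t < n} φ (N^{n-1-t} v) X^t` of the
endomorphism `N`, paired with the functional `φ`. -/
noncomputable def truncResolvent (φ : V →ₗ[R] R) (N : Module.End R V) (n : ℕ) : V →ₗ[R] R[X] :=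
  ∑ t ∈ range n, monomial t ∘ₗ φ ∘ₗ (N ^ (n - 1 - t))

variable (φ : V →ₗ[R] R) (N : Module.End R V)

lemma truncResolvent_apply (n : ℕ) (v : V) :
    truncResolvent φ N n v = ∑ t ∈ range n, monomial t (φ ((N ^ (n - 1 - t)) v)) := by
  simp [truncResolvent]

lemma truncResolvent_succ (n : ℕ) (v : V) :
    truncResolvent φ N (n + 1) v = X * truncResolvent φ N n v + C (φ ((N ^ n) v)) := by
  simp only [truncResolvent_apply, sum_range_succ', mul_sum, X_mul_monomial, monomial_zero_left,
    Nat.add_sub_cancel, Nat.sub_zero]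
  congr 1
  exact sum_congr rfl fun t _ ↦ by rw [Nat.sub_sub, add_comm 1 t]

lemma truncResolvent_add (m n : ℕ) (v : V) :
    truncResolvent φ N (m + n) v =
      X ^ n * truncResolvent φ N m v + truncResolvent φ N n ((N ^ m) v) := by
  induction n with
  | zero => simp [truncResolvent_apply φ N 0]
  | succ n ih =>
    rw [← add_assoc, truncResolvent_succ, ih, truncResolvent_succ, ← Module.End.mul_apply,
      ← pow_add, add_comm n m]
    ring

variable {N}

lemma X_pow_mul_truncResolvent {m : ℕ} (hN : N ^ m = 0) (t : ℕ) (v : V) :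
    X ^ t * truncResolvent φ N m v =
      X ^ m * truncResolvent φ N t v + truncResolvent φ N m ((N ^ t) v) := by
  rw [← truncResolvent_add, add_comm t m, truncResolvent_add, hN, LinearMap.zero_apply, map_zero,
    add_zero]

lemma sum_mul_truncResolvent_of_relation {ι : Type*} {m : ℕ} (hN : N ^ m = 0) (s : Finset ι)
    (T : Finset ℕ) (c : ℕ → ι → R) (l : ι → V)
    (hrel : ∑ t ∈ T, (N ^ t) (∑ a ∈ s, c t a • l a) = 0) :
    ∑ a ∈ s, (∑ t ∈ T, C (c t a) * X ^ t) * truncResolvent φ N m (l a) =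
      X ^ m * ∑ t ∈ T, truncResolvent φ N t (∑ a ∈ s, c t a • l a) := by
  calc ∑ a ∈ s, (∑ t ∈ T, C (c t a) * X ^ t) * truncResolvent φ N m (l a)
      = ∑ t ∈ T, X ^ t * truncResolvent φ N m (∑ a ∈ s, c t a • l a) := by
        simp only [sum_mul, map_sum, map_smul, smul_eq_C_mul, mul_sum]
        rw [sum_comm]
        exact sum_congr rfl fun t _ ↦ sum_congr rfl fun a _ ↦ by ring
    _ = X ^ m * ∑ t ∈ T, truncResolvent φ N t (∑ a ∈ s, c t a • l a) +
          truncResolvent φ N m (∑ t ∈ T, (N ^ t) (∑ a ∈ s, c t a • l a)) := by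
        simp only [X_pow_mul_truncResolvent φ hN, sum_add_distrib, mul_sum, map_sum]
    _ = X ^ m * ∑ t ∈ T, truncResolvent φ N t (∑ a ∈ s, c t a • l a) := by
        rw [hrel, map_zero, add_zero]

end TruncatedResolvent

section SiegelData

variable {F V : Type*} [Field F] [AddCommGroup V] [Module F V]
  {m : ℕ} {k : ℕ → ℕ} {N : Module.End F V} {l : ℕ → ℕ → V} {P : ℕ → ℕ → ℕ → ℕ → ℕ → ℕ → F}

lemma mk_mem_siegelIdxSet_zero {z y j : ℕ} :
    (z, y, j) ∈ siegelIdxSet m k 0 ↔ z + 2 ≤ y ∧ y ≤ m + 1 ∧ 1 ≤ j ∧ j ≤ k y := by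
  simp only [siegelIdxSet, Set.mem_ofPred_eq]
  omega

lemma mk_mem_blockIdx {u i : ℕ} :
    ⟨u, i⟩ ∈ blockIdx m k ↔ (1 ≤ u ∧ u ≤ m + 1) ∧ 1 ≤ i ∧ i ≤ k u := by
  simp only [blockIdx, mem_sigma, mem_Icc]

/-- In a skew block matrix the column block `β = m + 1 - v` belongs to the vectors `l_{v+1,j}`. -/
lemma exists_eq_of_mem_dualBlockIdx {b : (_ : ℕ) × ℕ} (hb : b ∈ dualBlockIdx m k) :
    ∃ v j, v ≤ m ∧ 1 ≤ j ∧ j ≤ k (v + 1) ∧ b = ⟨m + 1 - v, j⟩ := by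
  obtain ⟨β, j⟩ := b
  simp only [dualBlockIdx, mem_sigma, mem_Icc] at hb
  refine ⟨m + 1 - β, j, by omega, hb.2.1, ?_, ?_⟩
  · rw [show m + 1 - β + 1 = m + 2 - β by omega]
    exact hb.2.2
  · rw [show m + 1 - (m + 1 - β) = β by omega]

/-- `φ` is the coordinate functional of the basis `N^z l_{y,j}` of `V` given by (3.12) with `u = 0`,
at the index `q`. -/
def IsSiegelCoord (m : ℕ) (k : ℕ → ℕ) (N : Module.End F V) (l : ℕ → ℕ → V) (q : ℕ × ℕ × ℕ)
    (φ : V →ₗ[F] F) : Prop :=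
  ∀ z y j, (z, y, j) ∈ siegelIdxSet m k 0 →
    φ ((N ^ z) (l y j)) = if z = q.1 ∧ y = q.2.1 ∧ j = q.2.2 then 1 else 0

lemma IsSiegelBasis.exists_isSiegelCoord (h : IsSiegelBasis F m k N l) {q : ℕ × ℕ × ℕ}
    (hq : q ∈ siegelIdxSet m k 0) : ∃ φ, IsSiegelCoord m k N l q φ := by
  have hm : 0 < m := by
    have := mk_mem_siegelIdxSet_zero.1 hq
    omega
  obtain ⟨hli, hspan⟩ := h 0 hm
  rw [pow_zero, Module.End.one_eq_id, LinearMap.range_id, Set.image_eq_range] at hspan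
  let e := Module.Basis.mk hli hspan.ge
  refine ⟨e.coord ⟨q, hq⟩, fun z y j hp ↦ ?_⟩
  have he : (N ^ z) (l y j) = e ⟨(z, y, j), hp⟩ := by simp [e]
  rw [he, Module.Basis.coord_apply, Module.Basis.repr_self, Finsupp.single_apply]
  simp only [Subtype.mk.injEq, Prod.ext_iff]

namespace IsSiegelCoord

variable {φ : V →ₗ[F] F}

lemma apply_pow_eq {z y j : ℕ} (hφ : IsSiegelCoord m k N l (z, y, j) φ)
    (hq : (z, y, j) ∈ siegelIdxSet m k 0) (hP : SatisfiesP m k N l P)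
    {u v i : ℕ} (ha : ⟨u, i⟩ ∈ blockIdx m k) (hv : v < m) :
    φ ((N ^ v) (l u i)) = if v ≤ z then -P u v y z i j else 0 := by
  rw [mk_mem_siegelIdxSet_zero] at hq
  rw [mk_mem_blockIdx] at ha
  rw [hP u (mem_Icc.2 ha.1) v (mem_Icc.2 (by omega)) i (mem_Icc.2 ha.2)]
  simp only [map_neg, map_sum, map_smul, smul_eq_mul, sum_sigma']
  have hterm : ∀ x ∈ (Icc v (m - 1)).sigma fun z' ↦ (Icc (z' + 2) (m + 1)).sigma fun y' ↦
      Icc 1 (k y'), P u v x.2.1 x.1 i x.2.2 * φ ((N ^ x.1) (l x.2.1 x.2.2)) =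
        if x = ⟨z, y, j⟩ then P u v y z i j else 0 := by
    rintro ⟨z', y', j'⟩ hx
    simp only [mem_sigma, mem_Icc] at hx
    rw [hφ z' y' j' (mk_mem_siegelIdxSet_zero.2 ⟨hx.2.1.1, hx.2.1.2, hx.2.2⟩)]
    simp only [Sigma.mk.injEq, heq_eq_eq]
    grind
  rw [sum_congr rfl hterm, sum_ite_eq']
  simp only [mem_sigma, mem_Icc]
  grind

lemma truncResolvent_apply_of_lt {w j : ℕ} (hφ : IsSiegelCoord m k N l (w, w + 2, j) φ)
    {t y i : ℕ} (hty : t < y) (ha : ⟨y, i⟩ ∈ blockIdx m k) :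
    truncResolvent φ N t (l y i) = if y = t + 1 ∧ t = w + 1 ∧ i = j then 1 else 0 := by
  rw [mk_mem_blockIdx] at ha
  have hterm : ∀ s ∈ range t, monomial s (φ ((N ^ (t - 1 - s)) (l y i))) =
      if s = 0 then if y = t + 1 ∧ t = w + 1 ∧ i = j then (1 : F[X]) else 0 else 0 := by
    intro s hs
    rw [mem_range] at hs
    rw [hφ _ _ _ (mk_mem_siegelIdxSet_zero.2 (by omega))]
    by_cases hs0 : s = 0
    · subst hs0
      have hiff : (t - 1 - 0 = w ∧ y = w + 2 ∧ i = j) ↔ (y = t + 1 ∧ t = w + 1 ∧ i = j) := by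
        omega
      simp only [hiff, if_true]
      split_ifs <;> simp
    · rw [if_neg (by dsimp only; omega), if_neg hs0, map_zero]
  rw [truncResolvent_apply, sum_congr rfl hterm, sum_ite_eq']
  grind

end IsSiegelCoord

lemma Centry_eq_add {v : ℕ} (hv : v ≤ m) (t : ℕ) (a : (_ : ℕ) × ℕ) (j : ℕ) :
    Centry m P t a ⟨m + 1 - v, j⟩ =
      (if a = ⟨v + 1, j⟩ then if t = v then 1 else 0 else 0) +
        if v ≤ t ∧ t < m ∧ t + 2 ≤ a.1 then P (v + 1) v a.1 t j a.2 else 0 := by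
  obtain ⟨α, i⟩ := a
  simp only [Centry, Sigma.mk.injEq, heq_eq_eq, show m + 2 - (m + 1 - v) = v + 1 by omega,
    show m + 1 - (m + 1 - v) = v by omega]
  grind

/-- The vector `∑_a (C_t)_{a,b} l_a`: with `V` as an `F[X]`-module through `N`, the column `b` of
`B` gives the combination `∑_a B_{a,b} l_a = ∑_t N^t (columnCoeff t b)`. -/
noncomputable def columnCoeff (m : ℕ) (k : ℕ → ℕ) (l : ℕ → ℕ → V)
    (P : ℕ → ℕ → ℕ → ℕ → ℕ → ℕ → F) (t : ℕ) (b : (_ : ℕ) × ℕ) : V :=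
  ∑ a ∈ blockIdx m k, Centry m P t a b • l a.1 a.2

lemma columnCoeff_eq {v j : ℕ} (hv : v ≤ m) (hj : 1 ≤ j) (hjk : j ≤ k (v + 1)) (t : ℕ) :
    columnCoeff m k l P t ⟨m + 1 - v, j⟩ =
      (if t = v then l (v + 1) j else 0) +
        if v ≤ t ∧ t < m then ∑ y ∈ Icc (t + 2) (m + 1), ∑ i ∈ Icc 1 (k y),
          P (v + 1) v y t j i • l y i else 0 := by
  simp only [columnCoeff, Centry_eq_add hv, add_smul, sum_add_distrib, ite_smul, zero_smul,
    one_smul]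
  congr 1
  · rw [sum_ite_eq', if_pos (mk_mem_blockIdx.2 (by omega))]
  · rw [blockIdx, sum_sigma]
    split_ifs with h
    · have hIcc : Icc (t + 2) (m + 1) = {y ∈ Icc 1 (m + 1) | t + 2 ≤ y} := by
        ext y
        simp only [mem_Icc, mem_filter]
        omega
      simp only [h, true_and, hIcc, sum_filter, sum_ite_irrel, sum_const_zero]
    · refine sum_eq_zero fun y _ ↦ sum_eq_zero fun i _ ↦ if_neg (by tauto)

lemma sum_pow_columnCoeff_eq_zero (hN : N ^ m = 0) (hP : SatisfiesP m k N l P)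
    {b : (_ : ℕ) × ℕ} (hb : b ∈ dualBlockIdx m k) :
    ∑ t ∈ range (m + 1), (N ^ t) (columnCoeff m k l P t b) = 0 := by
  obtain ⟨v, j, hv, hj, hjk, rfl⟩ := exists_eq_of_mem_dualBlockIdx hb
  have hterm (t : ℕ) : (N ^ t) (columnCoeff m k l P t ⟨m + 1 - v, j⟩) =
      (if t = v then (N ^ t) (l (v + 1) j) else 0) +
        if v ≤ t ∧ t < m then ∑ y ∈ Icc (t + 2) (m + 1), ∑ i ∈ Icc 1 (k y),
          P (v + 1) v y t j i • (N ^ t) (l y i) else 0 := by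
    rw [columnCoeff_eq hv hj hjk, map_add, apply_ite (N ^ t), apply_ite (N ^ t), map_zero]
    simp only [map_sum, map_smul]
  simp only [hterm, sum_add_distrib]
  rw [sum_ite_eq', if_pos (mem_range.2 (by omega)), ← sum_filter]
  rcases hv.eq_or_lt with rfl | hvm
  · rw [hN, filter_false_of_mem fun t _ ↦ by omega]
    simp
  · have hIcc : {t ∈ range (m + 1) | v ≤ t ∧ t < m} = Icc v (m - 1) := by
      ext t
      simp only [mem_filter, mem_range, mem_Icc]
      omega
    rw [hIcc, hP (v + 1) (mem_Icc.2 (by omega)) v (mem_Icc.2 (by omega)) j (mem_Icc.2 ⟨hj, hjk⟩)]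
    exact neg_add_cancel _

namespace IsSiegelCoord

variable {φ : V →ₗ[F] F} {w j : ℕ}

lemma truncResolvent_columnCoeff (hφ : IsSiegelCoord m k N l (w, w + 2, j) φ) {v i : ℕ}
    (hv : v ≤ m) (hi : 1 ≤ i) (hik : i ≤ k (v + 1)) (t : ℕ) :
    truncResolvent φ N t (columnCoeff m k l P t ⟨m + 1 - v, i⟩) =
      if t = v then if v = w + 1 ∧ i = j then 1 else 0 else 0 := by
  have hhigher : truncResolvent φ N t (∑ y ∈ Icc (t + 2) (m + 1), ∑ i' ∈ Icc 1 (k y),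
      P (v + 1) v y t i i' • l y i') = 0 := by
    simp only [map_sum, map_smul]
    refine sum_eq_zero fun y hy ↦ sum_eq_zero fun i' hi' ↦ ?_
    rw [mem_Icc] at hy hi'
    rw [hφ.truncResolvent_apply_of_lt (by omega) (mk_mem_blockIdx.2 (by omega)), if_neg (by omega),
      smul_zero]
  rw [columnCoeff_eq hv hi hik, map_add, apply_ite (truncResolvent φ N t),
    apply_ite (truncResolvent φ N t), hhigher, map_zero, ite_self, add_zero]
  refine if_ctx_congr Iff.rfl (fun ht ↦ ?_) fun _ ↦ rfl
  rw [hφ.truncResolvent_apply_of_lt (by omega) (mk_mem_blockIdx.2 (by omega))]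
  simp only [ht, true_and]

lemma Bbarmat_apply (hφ : IsSiegelCoord m k N l (w, w + 2, j) φ) (hP : SatisfiesP m k N l P)
    (hq : (w, w + 2, j) ∈ siegelIdxSet m k 0) (a : {p // p ∈ blockIdx m k})
    {b : {p // p ∈ dualBlockIdx m k}} (hb : b.1 = ⟨m - w, j⟩) :
    Bbarmat m k P a b = truncResolvent φ N m (l a.1.1 a.1.2) := by
  have hw := mk_mem_siegelIdxSet_zero.1 hq
  rw [Bbarmat, of_apply, hb, sum_range_succ, truncResolvent_apply]
  have hlast : Dentry m P m a.1 ⟨m - w, j⟩ = 0 := by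
    rw [Dentry, if_pos rfl, if_neg (by dsimp only; omega)]
  rw [hlast, C_0, zero_mul, add_zero]
  refine sum_congr rfl fun t ht ↦ ?_
  rw [mem_range] at ht
  rw [C_mul_X_pow_eq_monomial, hφ.apply_pow_eq hq hP a.2 (by omega), Dentry, if_neg ht.ne]
  simp only [show m + 2 - (m - w) = w + 2 by omega, show m - (m - w) = w by omega]
  congr 1
  exact if_congr (by omega) rfl rfl

end IsSiegelCoord

lemma transpose_Bmat_mul_Bbarmat_apply (hN : N ^ m = 0) (hbasis : IsSiegelBasis F m k N l)
    (hP : SatisfiesP m k N l P) {w j : ℕ} (hq : (w, w + 2, j) ∈ siegelIdxSet m k 0)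
    (b' : {p // p ∈ dualBlockIdx m k}) {b : {p // p ∈ dualBlockIdx m k}}
    (hb : b.1 = ⟨m - w, j⟩) :
    ((Bmat m k P)ᵀ * Bbarmat m k P) b' b = if b' = b then X ^ m else 0 := by
  obtain ⟨v, i, hv, hi, hik, hb'⟩ := exists_eq_of_mem_dualBlockIdx b'.2
  obtain ⟨φ, hφ⟩ := hbasis.exists_isSiegelCoord hq
  have heq : v = w + 1 ∧ i = j ↔ b' = b := by
    have := mk_mem_siegelIdxSet_zero.1 hq
    rw [Subtype.ext_iff, hb', hb, Sigma.mk.injEq, heq_eq_eq]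
    omega
  calc ((Bmat m k P)ᵀ * Bbarmat m k P) b' b
      = ∑ a ∈ blockIdx m k, (∑ t ∈ range (m + 1), C (Centry m P t a b'.1) * X ^ t) *
          truncResolvent φ N m (l a.1 a.2) := by
        simp only [mul_apply, transpose_apply, hφ.Bbarmat_apply hP hq _ hb]
        exact sum_coe_sort (blockIdx m k) fun a ↦
          (∑ t ∈ range (m + 1), C (Centry m P t a b'.1) * X ^ t) *
            truncResolvent φ N m (l a.1 a.2)
    _ = X ^ m * ∑ t ∈ range (m + 1), truncResolvent φ N t (columnCoeff m k l P t b'.1) :=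
        sum_mul_truncResolvent_of_relation φ hN _ _ (fun t a ↦ Centry m P t a b'.1)
          (fun a ↦ l a.1 a.2) (sum_pow_columnCoeff_eq_zero hN hP b'.2)
    _ = if b' = b then X ^ m else 0 := by
        simp only [hb', hφ.truncResolvent_columnCoeff hv hi hik, heq]
        rw [sum_ite_eq', if_pos (mem_range.2 (by omega)), mul_ite, mul_one, mul_zero]

lemma Bmat_first_blockRow_apply {a : {p // p ∈ blockIdx m k}} {i : ℕ} (ha : a.1 = ⟨1, i⟩)
    (b : {p // p ∈ dualBlockIdx m k}) :
    Bmat m k P a b = if b.1 = ⟨m + 1, i⟩ then 1 else 0 := by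
  obtain ⟨v, j, hv, -, -, hb⟩ := exists_eq_of_mem_dualBlockIdx b.2
  have hiff : m + 1 - v = m + 1 ∧ j = i ↔ v = 0 ∧ i = j := by omega
  have hterm : ∀ t ∈ range (m + 1), C (Centry m P t a.1 b.1) * X ^ t =
      if t = 0 then if b.1 = ⟨m + 1, i⟩ then 1 else 0 else 0 := by
    intro t _
    rw [hb, ha, Centry_eq_add hv, if_neg (c := _ ∧ _) (by dsimp only; omega), add_zero]
    simp only [Sigma.mk.injEq, heq_eq_eq, hiff, Nat.add_eq_right, eq_comm (a := 1)]
    split_ifs <;> simp_all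
  rw [Bmat, of_apply, sum_congr rfl hterm, sum_ite_eq', if_pos (mem_range.2 m.succ_pos)]

lemma Bbarmat_last_blockCol_apply (a : {p // p ∈ blockIdx m k})
    {b : {p // p ∈ dualBlockIdx m k}} {j : ℕ} (hb : b.1 = ⟨m + 1, j⟩) :
    Bbarmat m k P a b = if a.1 = ⟨1, j⟩ then X ^ m else 0 := by
  have hterm : ∀ t ∈ range (m + 1), C (Dentry m P t a.1 b.1) * X ^ t =
      if t = m then if a.1 = ⟨1, j⟩ then X ^ m else 0 else 0 := by
    intro t ht
    rw [mem_range] at ht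
    simp only [Dentry, hb, Sigma.ext_iff, heq_eq_eq, true_and]
    by_cases htm : t = m
    · simp only [htm, if_true]
      split_ifs <;> simp
    · rw [if_neg htm, if_neg htm, if_neg (by omega), C_0, zero_mul]
  rw [Bbarmat, of_apply, sum_congr rfl hterm, sum_ite_eq', if_pos (mem_range.2 m.lt_succ_self)]

lemma transpose_Bmat_mul_Bbarmat_last_blockCol_apply (b' : {p // p ∈ dualBlockIdx m k})
    {b : {p // p ∈ dualBlockIdx m k}} {j : ℕ} (hb : b.1 = ⟨m + 1, j⟩) :
    ((Bmat m k P)ᵀ * Bbarmat m k P) b' b = if b' = b then X ^ m else 0 := by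
  have ha : (⟨1, j⟩ : (_ : ℕ) × ℕ) ∈ blockIdx m k := by
    simpa [blockIdx, dualBlockIdx, hb] using b.2
  rw [mul_apply, sum_eq_single ⟨⟨1, j⟩, ha⟩]
  · rw [transpose_apply, Bmat_first_blockRow_apply rfl, Bbarmat_last_blockCol_apply _ hb,
      if_pos rfl, ite_mul, one_mul, zero_mul]
    simp only [Subtype.ext_iff, hb]
  · intro a _ hne
    rw [Bbarmat_last_blockCol_apply _ hb, if_neg fun h ↦ hne (Subtype.ext h), mul_zero]
  · exact fun h ↦ (h (mem_univ _)).elim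

end SiegelData

/-- Lemma 3.32 of the paper: `Bᵗ ⬝ B̄ = N^m I_r` in `M_r(F[N])`. -/
theorem stmt_0 {F : Type*} [Field F] {V : Type*} [AddCommGroup V] [Module F V]
    [FiniteDimensional F V]
    (m : ℕ) (hm : 1 ≤ m) (N : Module.End F V) (hN : N ^ m = 0)
    (k : ℕ → ℕ) (l : ℕ → ℕ → V) (hbasis : IsSiegelBasis F m k N l)
    (P : ℕ → ℕ → ℕ → ℕ → ℕ → ℕ → F) (hP : SatisfiesP m k N l P) :
    (Bmat m k P)ᵀ * Bbarmat m k P =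
      (Polynomial.X : Polynomial F) ^ m •
        (1 : Matrix {p // p ∈ dualBlockIdx m k} {p // p ∈ dualBlockIdx m k} (Polynomial F)) := by
  refine Matrix.ext fun b' b ↦ ?_
  rw [Matrix.smul_apply, one_apply, smul_eq_mul, mul_ite, mul_one, mul_zero]
  obtain ⟨_ | w, j, hw, hj, hjk, hb⟩ := exists_eq_of_mem_dualBlockIdx b.2
  · exact transpose_Bmat_mul_Bbarmat_last_blockCol_apply b' hb
  · have hq : (w, w + 2, j) ∈ siegelIdxSet m k 0 :=
      mk_mem_siegelIdxSet_zero.2 ⟨le_rfl, by omega, hj, hjk⟩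
    rw [Nat.add_sub_add_right] at hb
    exact transpose_Bmat_mul_Bbarmat_apply hN hbasis hP hq b' hb
end

section
/- For all integers i ∈ [2, m+1], j ∈ [1, m−i+2], ξ ∈ [m−j, m−1] and ψ ∈ [ξ+2, m+1], the following identity of k_{i−1} × k_ψ matrices over F holds: (Σ_{β=0}^{j+ξ−m} Σ_{α=i+β}^{m+1−j+β} S_{i−1, i−2, α, i−2+β} · P_{α, m−j+β, ψ, ξ}) − S_{i−1, i−2, ψ, i−2+ξ+j−m} + P_{i−1, m−j, ψ, ξ} = 0. (Lemma 3.25 of the paper, the recurrent formula for the matrices P.) -/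
/-!
Let `C u v` be the array of coefficients of the vectors `N ^ v l_{u,a}` in the basis
`N ^ z l_{y,c}`, `z + 2 ≤ y`; it consists of the blocks `-P_{u,v,y,z}`. Applying `N ^ w` to the
expansion of `N ^ v l_{u,a}` and expanding each `N ^ (z + w) l_{y,c}` again gives the composition
law `C u (v + w) = ∑ C u v (z, y) * C y (z + w)`. If `z + w + 2 ≤ y`, then `N ^ (z + w) l_{y,c}` is
itself a basis vector, so its coefficients are Kronecker deltas, and at `(ξ, ψ)` these terms add up
to the single block `C u v (ξ - w, ψ)`. The terms with `y < z + w + 2` form the double sum of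
products. This works for every block row `u` and every exponent `v`; the Siegel object is the case
`v = u - 1`.
-/

namespace SiegelRecurrence

open Finset

section LinearAlgebra

variable {R M M' ι κ : Type*} [Ring R] [AddCommGroup M] [Module R M] [AddCommGroup M'] [Module R M']

theorem coeff_map_eq_sum_mul {b : ι → M} {b' : κ → M'} {s : Finset ι} {t : Finset κ}
    (hb' : LinearIndepOn R b' t) (T : M →ₗ[R] M') {x : M} {f : ι → R} {g : ι → κ → R} {h : κ → R}
    (hx : x = ∑ p ∈ s, f p • b p) (hT : ∀ p ∈ s, T (b p) = ∑ q ∈ t, g p q • b' q)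
    (hTx : T x = ∑ q ∈ t, h q • b' q) {q : κ} (hq : q ∈ t) :
    h q = ∑ p ∈ s, f p * g p q := by
  refine linearIndepOn_finset_iffₛ.1 hb' h (fun q ↦ ∑ p ∈ s, f p * g p q) ?_ q hq
  calc ∑ q ∈ t, h q • b' q
      = ∑ p ∈ s, f p • ∑ q ∈ t, g p q • b' q := by
        rw [← hTx, hx, map_sum]
        exact sum_congr rfl fun p hp ↦ by rw [map_smul, hT p hp]
    _ = ∑ q ∈ t, (∑ p ∈ s, f p * g p q) • b' q := by
        simp only [smul_sum, smul_smul, sum_smul]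
        exact sum_comm

theorem coeff_eq_ite [DecidableEq ι] {b : ι → M} {s : Finset ι} (hb : LinearIndepOn R b s)
    {p q : ι} (hp : p ∈ s) (hq : q ∈ s) {h : ι → R} (hbp : b p = ∑ q ∈ s, h q • b q) :
    h q = if p = q then 1 else 0 := by
  refine linearIndepOn_finset_iffₛ.1 hb h (fun q ↦ if p = q then 1 else 0) ?_ q hq
  simp only [ite_smul, one_smul, zero_smul, sum_ite_eq, if_pos hp, ← hbp]

end LinearAlgebra

section Index

variable {k : ℕ → ℕ} {Z : Finset ℕ} {Y : ℕ → Finset ℕ}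

/-- The triples `(z, y, c)` with `z ∈ Z`, `y ∈ Y z` and `1 ≤ c ≤ k y`: the flat index set of the
iterated sums over exponents `z`, blocks `y` and vectors `c` of a block. -/
def tripleIdx (k : ℕ → ℕ) (Z : Finset ℕ) (Y : ℕ → Finset ℕ) : Finset (ℕ × ℕ × ℕ) :=
  (Z.sigma fun z ↦ (Y z).sigma fun y ↦ Icc 1 (k y)).map
    ⟨fun p ↦ (p.1, p.2.1, p.2.2), fun ⟨_, _, _⟩ ⟨_, _, _⟩ h ↦ by simpa using h⟩

theorem mem_tripleIdx {p : ℕ × ℕ × ℕ} :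
    p ∈ tripleIdx k Z Y ↔ p.1 ∈ Z ∧ p.2.1 ∈ Y p.1 ∧ p.2.2 ∈ Icc 1 (k p.2.1) := by
  refine mem_map.trans ⟨?_, fun h ↦ ⟨⟨p.1, p.2.1, p.2.2⟩, ?_, rfl⟩⟩
  · rintro ⟨⟨z, y, c⟩, h, rfl⟩
    exact ⟨(mem_sigma.1 h).1, mem_sigma.1 (mem_sigma.1 h).2⟩
  · simpa only [mem_sigma] using h

theorem sum_tripleIdx {A : Type*} [AddCommMonoid A] (f : ℕ × ℕ × ℕ → A) :
    ∑ p ∈ tripleIdx k Z Y, f p = ∑ z ∈ Z, ∑ y ∈ Y z, ∑ c ∈ Icc 1 (k y), f (z, y, c) := by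
  simp only [tripleIdx, sum_map, sum_sigma]
  rfl

/-- The index set `siegelIdxSet m k v` of condition (3.12) as a `Finset`. -/
def siegelIdx (m : ℕ) (k : ℕ → ℕ) (v : ℕ) : Finset (ℕ × ℕ × ℕ) :=
  tripleIdx k (Icc v (m - 1)) fun z ↦ Icc (z + 2) (m + 1)

theorem mem_siegelIdx {m v : ℕ} {p : ℕ × ℕ × ℕ} :
    p ∈ siegelIdx m k v ↔ (v ≤ p.1 ∧ p.1 ≤ m - 1) ∧ (p.1 + 2 ≤ p.2.1 ∧ p.2.1 ≤ m + 1) ∧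
      p.2.2 ∈ Icc 1 (k p.2.1) := by
  simp only [siegelIdx, mem_tripleIdx, mem_Icc]

theorem coe_siegelIdx (m : ℕ) (k : ℕ → ℕ) (v : ℕ) :
    (siegelIdx m k v : Set (ℕ × ℕ × ℕ)) = siegelIdxSet m k v := by
  ext p
  simp only [mem_coe, mem_siegelIdx, siegelIdxSet, Set.mem_ofPred_eq, mem_Icc, and_assoc]

end Index

variable {R M : Type*} [Ring R] [AddCommGroup M] [Module R M] {m : ℕ} {k : ℕ → ℕ}
  {N : Module.End R M} {l : ℕ → ℕ → M} {P : ℕ → ℕ → ℕ → ℕ → ℕ → ℕ → R}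

/-- The vector `N ^ z l_{y,c}` attached to `p = (z, y, c)`. -/
def siegelVec (N : Module.End R M) (l : ℕ → ℕ → M) (p : ℕ × ℕ × ℕ) : M :=
  (N ^ p.1) (l p.2.1 p.2.2)

/-- The defining relation (3.20) of the matrices `P_{u,v,y,z}`, over an arbitrary ring; over a
field it is `SatisfiesP`. -/
def IsSiegelExpansion (m : ℕ) (k : ℕ → ℕ) (N : Module.End R M) (l : ℕ → ℕ → M)
    (P : ℕ → ℕ → ℕ → ℕ → ℕ → ℕ → R) : Prop :=
  ∀ u ∈ Icc 1 (m + 1), ∀ v ∈ Icc 0 (m - 1), ∀ i ∈ Icc 1 (k u),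
    (N ^ v) (l u i) =
      -∑ z ∈ Icc v (m - 1), ∑ y ∈ Icc (z + 2) (m + 1),
        ∑ j ∈ Icc 1 (k y), P u v y z i j • (N ^ z) (l y j)

/-- The coefficient of `N ^ v l_{u,i}` at the basis vector `N ^ z l_{y,c}`, `p = (z, y, c)`. The
matrix `P_{u,v,y,z}` is meaningful only for `v ≤ z`; extending it by zero lets all expansions run
over the index set `siegelIdx m k 0`. -/
def siegelCoeff (P : ℕ → ℕ → ℕ → ℕ → ℕ → ℕ → R) (u v i : ℕ) (p : ℕ × ℕ × ℕ) : R :=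
  if v ≤ p.1 then -P u v p.2.1 p.1 i p.2.2 else 0

theorem siegelCoeff_of_le {v : ℕ} {p : ℕ × ℕ × ℕ} (hvp : v ≤ p.1) (u i : ℕ) :
    siegelCoeff P u v i p = -P u v p.2.1 p.1 i p.2.2 :=
  if_pos hvp

theorem siegelCoeff_of_lt {v : ℕ} {p : ℕ × ℕ × ℕ} (hpv : p.1 < v) (u i : ℕ) :
    siegelCoeff P u v i p = 0 :=
  if_neg hpv.not_ge

theorem sum_filter_lt_siegelCoeff_mul {v w e : ℕ} (hm : v + w + e < m) (u a ψ b : ℕ) :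
    ∑ p ∈ siegelIdx m k 0 with p.2.1 < p.1 + w + 2,
        siegelCoeff P u v a p * siegelCoeff P p.2.1 (p.1 + w) p.2.2 (v + w + e, ψ, b) =
      ∑ β ∈ Icc 0 e, ∑ α ∈ Icc (v + 2 + β) (v + w + 1 + β), ∑ c ∈ Icc 1 (k α),
        P u v α (v + β) a c * P α (v + w + β) ψ (v + w + e) c b := by
  set B : Finset (ℕ × ℕ × ℕ) :=
    tripleIdx k (Icc v (v + e)) fun z ↦ Icc (z + 2) (z + w + 1) with hB
  have hBs : B ⊆ {p ∈ siegelIdx m k 0 | p.2.1 < p.1 + w + 2} := by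
    intro p hp
    rw [hB, mem_tripleIdx, mem_Icc, mem_Icc] at hp
    exact mem_filter.2 ⟨mem_siegelIdx.2 ⟨by omega, by omega, hp.2.2⟩, by omega⟩
  calc ∑ p ∈ siegelIdx m k 0 with p.2.1 < p.1 + w + 2,
        siegelCoeff P u v a p * siegelCoeff P p.2.1 (p.1 + w) p.2.2 (v + w + e, ψ, b)
      = ∑ p ∈ B, siegelCoeff P u v a p *
          siegelCoeff P p.2.1 (p.1 + w) p.2.2 (v + w + e, ψ, b) := by
        refine (sum_subset hBs fun p hp hpB ↦ ?_).symm
        rw [mem_filter, mem_siegelIdx] at hp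
        rw [hB, mem_tripleIdx, mem_Icc, mem_Icc] at hpB
        have hrange : p.1 < v ∨ v + w + e < p.1 + w := by
          by_contra! h
          exact hpB ⟨by omega, by omega, hp.1.2.2⟩
        rcases hrange with hlow | hhigh
        · rw [siegelCoeff_of_lt hlow, zero_mul]
        · rw [siegelCoeff_of_lt (p := (v + w + e, ψ, b)) hhigh, mul_zero]
    _ = ∑ p ∈ B, P u v p.2.1 p.1 a p.2.2 * P p.2.1 (p.1 + w) ψ (v + w + e) p.2.2 b := by
        refine sum_congr rfl fun p hp ↦ ?_
        rw [hB, mem_tripleIdx, mem_Icc] at hp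
        rw [siegelCoeff_of_le (by omega), siegelCoeff_of_le (by dsimp only; omega), neg_mul_neg]
    _ = _ := by
        have hIcc : Icc v (v + e) = (Icc 0 e).map (addLeftEmbedding v) := by
          rw [map_add_left_Icc, add_zero]
        rw [hB, sum_tripleIdx, hIcc, sum_map]
        simp only [addLeftEmbedding_apply, add_right_comm]

namespace IsSiegelExpansion

theorem pow_apply_eq_sum (hP : IsSiegelExpansion m k N l P) (hN : N ^ m = 0) {u a : ℕ}
    (hu : u ∈ Icc 1 (m + 1)) (ha : a ∈ Icc 1 (k u)) (v : ℕ) :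
    (N ^ v) (l u a) = ∑ p ∈ siegelIdx m k 0, siegelCoeff P u v a p • siegelVec N l p := by
  rcases le_or_gt m v with hmv | hvm
  · rw [pow_eq_zero_of_le hmv hN, LinearMap.zero_apply]
    refine (sum_eq_zero fun p hp ↦ ?_).symm
    rw [mem_siegelIdx] at hp
    rw [siegelCoeff_of_lt (by omega), zero_smul]
  calc (N ^ v) (l u a)
      = ∑ p ∈ siegelIdx m k v, -P u v p.2.1 p.1 a p.2.2 • siegelVec N l p := by
        rw [hP u hu v (mem_Icc.2 (by omega)) a ha, siegelIdx, sum_tripleIdx]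
        simp only [neg_smul, sum_neg_distrib, siegelVec]
    _ = ∑ p ∈ siegelIdx m k v, siegelCoeff P u v a p • siegelVec N l p :=
        sum_congr rfl fun p hp ↦ by rw [siegelCoeff_of_le (mem_siegelIdx.1 hp).1.1]
    _ = ∑ p ∈ siegelIdx m k 0, siegelCoeff P u v a p • siegelVec N l p := by
        refine sum_subset (fun p hp ↦ ?_) fun p hp hpv ↦ ?_
        · rw [mem_siegelIdx] at hp ⊢
          exact ⟨⟨p.1.zero_le, hp.1.2⟩, hp.2⟩
        · rw [mem_siegelIdx] at hp hpv
          have hlow : p.1 < v := not_le.1 fun h ↦ hpv ⟨⟨h, hp.1.2⟩, hp.2⟩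
          rw [siegelCoeff_of_lt hlow, zero_smul]

theorem siegelCoeff_add (hP : IsSiegelExpansion m k N l P) (hN : N ^ m = 0)
    (hl : LinearIndepOn R (siegelVec N l) (siegelIdx m k 0))
    {u a : ℕ} (hu : u ∈ Icc 1 (m + 1)) (ha : a ∈ Icc 1 (k u)) (v w : ℕ)
    {q : ℕ × ℕ × ℕ} (hq : q ∈ siegelIdx m k 0) :
    siegelCoeff P u (v + w) a q = ∑ p ∈ siegelIdx m k 0,
      siegelCoeff P u v a p * siegelCoeff P p.2.1 (p.1 + w) p.2.2 q := by
  refine coeff_map_eq_sum_mul hl (N ^ w) (hP.pow_apply_eq_sum hN hu ha v) (fun p hp ↦ ?_) ?_ hq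
  · rw [mem_siegelIdx] at hp
    rw [siegelVec, ← Module.End.mul_apply, ← pow_add, add_comm w]
    exact hP.pow_apply_eq_sum hN (mem_Icc.2 (by omega)) hp.2.2 _
  · rw [← Module.End.mul_apply, ← pow_add, add_comm w]
    exact hP.pow_apply_eq_sum hN hu ha _

theorem siegelCoeff_eq_ite (hP : IsSiegelExpansion m k N l P) (hN : N ^ m = 0)
    (hl : LinearIndepOn R (siegelVec N l) (siegelIdx m k 0))
    {p q : ℕ × ℕ × ℕ} (hp : p ∈ siegelIdx m k 0) (hq : q ∈ siegelIdx m k 0) :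
    siegelCoeff P p.2.1 p.1 p.2.2 q = if p = q then 1 else 0 := by
  refine coeff_eq_ite hl hp hq ?_
  rw [mem_siegelIdx] at hp
  exact hP.pow_apply_eq_sum hN (mem_Icc.2 (by omega)) hp.2.2 _

theorem sum_filter_lt_add_siegelCoeff (hP : IsSiegelExpansion m k N l P) (hN : N ^ m = 0)
    (hl : LinearIndepOn R (siegelVec N l) (siegelIdx m k 0))
    {u a v w e ψ b : ℕ} (hu : u ∈ Icc 1 (m + 1)) (ha : a ∈ Icc 1 (k u))
    (hq : (v + w + e, ψ, b) ∈ siegelIdx m k 0) :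
    ∑ p ∈ siegelIdx m k 0 with p.2.1 < p.1 + w + 2,
        siegelCoeff P u v a p * siegelCoeff P p.2.1 (p.1 + w) p.2.2 (v + w + e, ψ, b)
      + siegelCoeff P u v a (v + e, ψ, b) = siegelCoeff P u (v + w) a (v + w + e, ψ, b) := by
  rw [hP.siegelCoeff_add hN hl hu ha v w hq,
    ← sum_filter_add_sum_filter_not (siegelIdx m k 0) (fun p ↦ p.2.1 < p.1 + w + 2)]
  congr 1
  have hcoeff : ∀ p ∈ {p ∈ siegelIdx m k 0 | ¬p.2.1 < p.1 + w + 2},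
      siegelCoeff P p.2.1 (p.1 + w) p.2.2 (v + w + e, ψ, b) =
        if p = (v + e, ψ, b) then 1 else 0 := by
    rintro ⟨z, y, c⟩ hp
    simp only [mem_filter, mem_siegelIdx] at hp
    have hshift : (z + w, y, c) ∈ siegelIdx m k 0 := by
      simp only [mem_siegelIdx]
      exact ⟨by omega, by omega, hp.1.2.2⟩
    rw [hP.siegelCoeff_eq_ite hN hl hshift hq]
    simp only [Prod.mk.injEq, show z + w = v + w + e ↔ z = v + e by omega]
  rw [sum_congr rfl fun p hp ↦ by rw [hcoeff p hp]]
  have hmem : (v + e, ψ, b) ∈ {p ∈ siegelIdx m k 0 | ¬p.2.1 < p.1 + w + 2} := by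
    simp only [mem_filter, mem_siegelIdx] at hq ⊢
    exact ⟨⟨by omega, by omega, hq.2.2⟩, by omega⟩
  simp only [mul_ite, mul_one, mul_zero, sum_ite_eq', if_pos hmem]

end IsSiegelExpansion

end SiegelRecurrence

section Recurrence

open Finset SiegelRecurrence

theorem stmt_5_general {R M : Type*} [Ring R] [AddCommGroup M] [Module R M] {m : ℕ}
    {N : Module.End R M} (hN : N ^ m = 0) {k : ℕ → ℕ} {l : ℕ → ℕ → M}
    (hl : LinearIndepOn R (siegelVec N l) (siegelIdxSet m k 0))
    {P : ℕ → ℕ → ℕ → ℕ → ℕ → ℕ → R} (hP : IsSiegelExpansion m k N l P)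
    {u v t ξ ψ a b : ℕ} (hu : u ∈ Icc 1 (m + 1)) (hvt : v ≤ t) (htξ : t ≤ ξ)
    (hψ : ψ ∈ Icc (ξ + 2) (m + 1)) (ha : a ∈ Icc 1 (k u)) (hb : b ∈ Icc 1 (k ψ)) :
    (∑ β ∈ Icc 0 (ξ - t), ∑ α ∈ Icc (v + 2 + β) (t + 1 + β), ∑ c ∈ Icc 1 (k α),
        P u v α (v + β) a c * P α (t + β) ψ ξ c b)
      - P u v ψ (v + (ξ - t)) a b + P u t ψ ξ a b = 0 := by
  obtain ⟨w, rfl⟩ := Nat.exists_eq_add_of_le hvt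
  obtain ⟨e, rfl⟩ := Nat.exists_eq_add_of_le htξ
  rw [mem_Icc] at hψ
  have hq : (v + w + e, ψ, b) ∈ siegelIdx m k 0 := by
    simp only [mem_siegelIdx]
    exact ⟨by omega, hψ, hb⟩
  have hrec := hP.sum_filter_lt_add_siegelCoeff hN (by rwa [coe_siegelIdx]) hu ha hq
  rw [sum_filter_lt_siegelCoeff_mul (by omega), siegelCoeff_of_le (Nat.le_add_right v e),
    siegelCoeff_of_le (Nat.le_add_right (v + w) e)] at hrec
  rw [Nat.add_sub_cancel_left, sub_eq_add_neg, hrec, neg_add_cancel]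

end Recurrence

/-- Lemma 3.25 of the paper, the recurrent formula for the matrices `P`:
for `i ∈ [2, m+1]`, `j ∈ [1, m-i+2]`, `ξ ∈ [m-j, m-1]`, `ψ ∈ [ξ+2, m+1]`,
`(Σ_{β=0}^{j+ξ-m} Σ_{α=i+β}^{m+1-j+β} S_{i-1,i-2,α,i-2+β} P_{α,m-j+β,ψ,ξ})
  − S_{i-1,i-2,ψ,i-2+ξ+j-m} + P_{i-1,m-j,ψ,ξ} = 0`,
where `S_{u,u-1,y,z} = P_{u,u-1,y,z}` is the Siegel object. -/
theorem stmt_5 {F : Type*} [Field F] {V : Type*} [AddCommGroup V] [Module F V]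
    [FiniteDimensional F V]
    (m : ℕ) (hm : 1 ≤ m) (N : Module.End F V) (hN : N ^ m = 0)
    (k : ℕ → ℕ) (l : ℕ → ℕ → V) (hbasis : IsSiegelBasis F m k N l)
    (P : ℕ → ℕ → ℕ → ℕ → ℕ → ℕ → F) (hP : SatisfiesP m k N l P) :
    ∀ i ∈ Finset.Icc 2 (m + 1), ∀ j ∈ Finset.Icc 1 (m + 2 - i),
      ∀ ξ ∈ Finset.Icc (m - j) (m - 1), ∀ ψ ∈ Finset.Icc (ξ + 2) (m + 1),
        ∀ a ∈ Finset.Icc 1 (k (i - 1)), ∀ b ∈ Finset.Icc 1 (k ψ),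
          (∑ β ∈ Finset.Icc 0 (j + ξ - m), ∑ α ∈ Finset.Icc (i + β) (m + 1 - j + β),
              ∑ c ∈ Finset.Icc 1 (k α),
                P (i - 1) (i - 2) α (i - 2 + β) a c * P α (m - j + β) ψ ξ c b)
            - P (i - 1) (i - 2) ψ (i - 2 + (ξ + j - m)) a b
            + P (i - 1) (m - j) ψ ξ a b = 0 := by
  intro i hi j hj ξ hξ ψ hψ a ha b hb
  rw [Finset.mem_Icc] at hi hj hξ
  have hgen := stmt_5_general hN (hbasis 0 hm).1 hP (v := i - 2) (t := m - j)
    (Finset.mem_Icc.2 (by omega)) (by omega) hξ.1 hψ ha hb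
  rw [add_comm j ξ]
  rwa [show i - 2 + 2 = i by omega, show ξ - (m - j) = ξ + j - m by omega,
    show m - j + 1 = m + 1 - j by omega] at hgen
end

section
/- 𝔓 is the inverse of 𝔖, i.e. 𝔖·𝔓 = 𝔓·𝔖 = I_r. (Remark 3.24.B of the paper.) -/
/-- The block unitriangular matrix `𝔖` of Remark 3.24.B: the `(i,j)`-th block is
`S_{i,i-1,j,i-1}` for `j > i`, `I_{k_i}` for `j = i` and `0` for `j < i`. -/
def frakS {F : Type*} [Field F] (m : ℕ) (k : ℕ → ℕ) (P : ℕ → ℕ → ℕ → ℕ → ℕ → ℕ → F) :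
    Matrix {p // p ∈ blockIdx m k} {p // p ∈ blockIdx m k} F :=
  Matrix.of fun a b =>
    if a.1.1 = b.1.1 then (if a.1.2 = b.1.2 then 1 else 0)
    else if a.1.1 < b.1.1 then P a.1.1 (a.1.1 - 1) b.1.1 (a.1.1 - 1) a.1.2 b.1.2
    else 0

/-- The block unitriangular matrix `𝔓` of Remark 3.24.B: the `(i,j)`-th block is
`-P_{i,j-2,j,j-2}` for `j > i`, `I_{k_i}` for `j = i` and `0` for `j < i`. -/
def frakP {F : Type*} [Field F] (m : ℕ) (k : ℕ → ℕ) (P : ℕ → ℕ → ℕ → ℕ → ℕ → ℕ → F) :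
    Matrix {p // p ∈ blockIdx m k} {p // p ∈ blockIdx m k} F :=
  Matrix.of fun a b =>
    if a.1.1 = b.1.1 then (if a.1.2 = b.1.2 then 1 else 0)
    else if a.1.1 < b.1.1 then -P a.1.1 (b.1.1 - 2) b.1.1 (b.1.1 - 2) a.1.2 b.1.2
    else 0

/-! The functional `φ` reading off the coordinate of `N ^ (w - 2) l_{w,h}` in the basis (3.12)
kills the range of `N ^ (w - 1)`. Modulo this range, relation (3.20) says that the values of `φ` on
the vectors `N ^ (w - 2) l_b` form the `(w,h)`-th column of `𝔓`. The same relation says that the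
`(u,i)`-th row of `𝔖` is a relation between the vectors `N ^ (u - 1) l_b` modulo the range of
`N ^ u`. Applying `φ ∘ N ^ (w - u - 1)` to that relation gives `(𝔖 * 𝔓)_{(u,i),(w,h)} = 0` for
`u < w`. -/

section Unitriangular

variable {ι α R : Type*} [DecidableEq ι]

/-- Block upper unitriangularity: the blocks are the fibres of `d`, the blocks below the diagonal
vanish, and the diagonal blocks are identity matrices. -/
def IsBlockUnitriangular [LE α] [Zero R] [One R] (M : Matrix ι ι R) (d : ι → α) : Prop :=
  ∀ ⦃i j⦄, d j ≤ d i → M i j = (1 : Matrix ι ι R) i j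

namespace IsBlockUnitriangular

variable [LinearOrder α] {d : ι → α}

theorem mul [Fintype ι] [NonAssocSemiring R] {A B : Matrix ι ι R}
    (hA : IsBlockUnitriangular A d) (hB : IsBlockUnitriangular B d) :
    IsBlockUnitriangular (A * B) d := by
  intro i j hji
  rw [Matrix.mul_apply, Finset.sum_eq_single i]
  · rw [hA le_rfl, hB hji, Matrix.one_apply_eq, one_mul]
  · intro k _ hki
    rcases le_or_gt (d k) (d i) with hle | hlt
    · rw [hA hle, Matrix.one_apply_ne hki.symm, zero_mul]
    · have hkj : k ≠ j := by
        rintro rfl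
        exact hji.not_gt hlt
      rw [hB (hji.trans hlt.le), Matrix.one_apply_ne hkj, mul_zero]
  · simp

theorem eq_one_iff [Zero R] [One R] {A : Matrix ι ι R} (hA : IsBlockUnitriangular A d) :
    A = 1 ↔ ∀ i j, d i < d j → A i j = 0 := by
  constructor
  · rintro rfl i j hij
    exact Matrix.one_apply_ne fun h => hij.ne (congrArg d h)
  · intro h
    ext i j
    rcases le_or_gt (d j) (d i) with hji | hij
    · exact hA hji
    · rw [h i j hij, Matrix.one_apply_ne fun h => hij.ne (congrArg d h)]

end IsBlockUnitriangular

end Unitriangular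

theorem dotProduct_eq_zero_of_sum_smul_mem_range {ι R M : Type*} [Fintype ι] [Semiring R]
    [AddCommMonoid M] [Module R M] {N : Module.End R M} {φ : M →ₗ[R] R} {x : ι → M} {s p : ι → R}
    {n t : ℕ} (hs : ∑ b, s b • (N ^ n) (x b) ∈ LinearMap.range (N ^ (n + 1)))
    (hp : ∀ b, φ ((N ^ (n + t)) (x b)) = p b)
    (hφ : LinearMap.range (N ^ (n + 1 + t)) ≤ LinearMap.ker φ) : s ⬝ᵥ p = 0 := by
  obtain ⟨y, hy⟩ := hs
  calc s ⬝ᵥ p = φ ((N ^ t) (∑ b, s b • (N ^ n) (x b))) := by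
        simp only [dotProduct, map_sum, map_smul, smul_eq_mul, ← hp, add_comm n t, pow_add,
          Module.End.mul_apply]
    _ = φ ((N ^ (n + 1 + t)) y) := by
        rw [← hy, ← Module.End.mul_apply, ← pow_add, add_comm t]
    _ = 0 := hφ ⟨y, rfl⟩

section Siegel

variable {F : Type*} [Field F] {V : Type*} [AddCommGroup V] [Module F V]
  {m : ℕ} {k : ℕ → ℕ} {N : Module.End F V} {l : ℕ → ℕ → V}
  {P : ℕ → ℕ → ℕ → ℕ → ℕ → ℕ → F}

section BlockMatrices

theorem one_le_blockIdx_fst (a : blockIdx m k) : 1 ≤ a.1.1 :=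
  (Finset.mem_Icc.mp (Finset.mem_sigma.mp a.2).1).1

theorem blockIdx_fst_le (a : blockIdx m k) : a.1.1 ≤ m + 1 :=
  (Finset.mem_Icc.mp (Finset.mem_sigma.mp a.2).1).2

theorem sum_blockIdx_ite_le {M : Type*} [AddCommMonoid M] (f : ℕ → ℕ → M) {n : ℕ} (hn : 1 ≤ n) :
    ∑ b : blockIdx m k, (if n ≤ b.1.1 then f b.1.1 b.1.2 else 0) =
      ∑ y ∈ Finset.Icc n (m + 1), ∑ j ∈ Finset.Icc 1 (k y), f y j := by
  have hIcc : Finset.Icc n (m + 1) = {y ∈ Finset.Icc 1 (m + 1) | n ≤ y} := by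
    ext y
    simp only [Finset.mem_Icc, Finset.mem_filter]
    omega
  rw [Finset.sum_coe_sort (blockIdx m k) fun b => if n ≤ b.1 then f b.1 b.2 else 0, blockIdx,
    Finset.sum_sigma, hIcc, Finset.sum_filter]
  refine Finset.sum_congr rfl fun y _ => ?_
  split_ifs <;> simp

theorem one_apply_blockIdx {R : Type*} [Zero R] [One R] (a b : blockIdx m k) :
    (1 : Matrix (blockIdx m k) (blockIdx m k) R) a b =
      if a.1.1 = b.1.1 then (if a.1.2 = b.1.2 then 1 else 0) else 0 := by
  obtain ⟨⟨u, i⟩, _⟩ := a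
  obtain ⟨⟨w, h⟩, _⟩ := b
  simp only [Matrix.one_apply, Subtype.mk.injEq, Sigma.mk.injEq, heq_eq_eq, ite_and]

theorem frakS_isBlockUnitriangular : IsBlockUnitriangular (frakS m k P) fun a => a.1.1 := by
  intro a b hba
  rw [one_apply_blockIdx, frakS, Matrix.of_apply, if_neg hba.not_gt]

theorem frakP_isBlockUnitriangular : IsBlockUnitriangular (frakP m k P) fun a => a.1.1 := by
  intro a b hba
  rw [one_apply_blockIdx, frakP, Matrix.of_apply, if_neg hba.not_gt]

theorem frakS_apply_eq_one_add {a : blockIdx m k} {n : ℕ} (ha : a.1.1 = n + 1)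
    (b : blockIdx m k) :
    frakS m k P a b = (1 : Matrix (blockIdx m k) (blockIdx m k) F) a b +
      if n + 2 ≤ b.1.1 then P a.1.1 n b.1.1 n a.1.2 b.1.2 else 0 := by
  rcases le_or_gt b.1.1 a.1.1 with hba | hab
  · rw [frakS_isBlockUnitriangular hba, if_neg (by omega), add_zero]
  · rw [one_apply_blockIdx, frakS, Matrix.of_apply, if_neg hab.ne, if_pos hab, if_neg hab.ne,
      if_pos (by omega), zero_add, ha, Nat.add_sub_cancel]

end BlockMatrices

namespace SatisfiesP

-- This is relation (3.20), whose terms with `z > v` lie in the range of `N ^ (v + 1)`.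
theorem add_sum_mem_range (hP : SatisfiesP m k N l P) (a : blockIdx m k) {v : ℕ} (hv : v < m) :
    (N ^ v) (l a.1.1 a.1.2) + ∑ b : blockIdx m k,
        (if v + 2 ≤ b.1.1 then P a.1.1 v b.1.1 v a.1.2 b.1.2 else 0) •
          (N ^ v) (l b.1.1 b.1.2) ∈
      LinearMap.range (N ^ (v + 1)) := by
  obtain ⟨hu, hi⟩ := Finset.mem_sigma.mp a.2
  have hrel := hP a.1.1 hu v (Finset.mem_Icc.mpr (by omega)) a.1.2 hi
  rw [← Finset.add_sum_Ioc_eq_sum_Icc (by omega : v ≤ m - 1)] at hrel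
  simp only [ite_smul, zero_smul]
  rw [sum_blockIdx_ite_le (fun y j => P a.1.1 v y v a.1.2 j • (N ^ v) (l y j)) (by omega), hrel,
    neg_add_rev, neg_add_cancel_right]
  refine neg_mem (sum_mem fun z hz => sum_mem fun y _ => sum_mem fun j _ =>
    Submodule.smul_mem _ _ ?_)
  exact N.iterateRange.monotone (Finset.mem_Ioc.mp hz).1 ⟨l y j, rfl⟩

theorem sum_frakS_smul_mem_range (hP : SatisfiesP m k N l P) {a : blockIdx m k} {n : ℕ}
    (ha : a.1.1 = n + 1) (hn : n < m) :
    ∑ b, frakS m k P a b • (N ^ n) (l b.1.1 b.1.2) ∈ LinearMap.range (N ^ (n + 1)) := by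
  simpa only [frakS_apply_eq_one_add ha, add_smul, Finset.sum_add_distrib, Matrix.one_apply,
    ite_smul, one_smul, zero_smul, Finset.sum_ite_eq, Finset.mem_univ, if_true]
    using hP.add_sum_mem_range a hn

theorem functional_apply_eq_frakP (hP : SatisfiesP m k N l P) {c : blockIdx m k} {v : ℕ}
    (hc : c.1.1 = v + 2) {φ : Module.Dual F V}
    (hdual : ∀ b : blockIdx m k, v + 2 ≤ b.1.1 → φ ((N ^ v) (l b.1.1 b.1.2)) =
      (1 : Matrix (blockIdx m k) (blockIdx m k) F) b c)
    (hker : LinearMap.range (N ^ (v + 1)) ≤ LinearMap.ker φ) (a : blockIdx m k) :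
    φ ((N ^ v) (l a.1.1 a.1.2)) = frakP m k P a c := by
  rcases le_or_gt c.1.1 a.1.1 with hca | hac
  · rw [hdual a (hc ▸ hca), frakP_isBlockUnitriangular hca]
  · have hv : v < m := by linarith [blockIdx_fst_le c]
    have hzero := LinearMap.mem_ker.mp (hker (hP.add_sum_mem_range a hv))
    have hsum : ∑ b : blockIdx m k,
        (if v + 2 ≤ b.1.1 then P a.1.1 v b.1.1 v a.1.2 b.1.2 else 0) *
          φ ((N ^ v) (l b.1.1 b.1.2)) = P a.1.1 v c.1.1 v a.1.2 c.1.2 := by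
      rw [Finset.sum_eq_single c]
      · rw [if_pos hc.ge, hdual c hc.ge, Matrix.one_apply_eq, mul_one]
      · intro b _ hbc
        split_ifs with hb
        · rw [hdual b hb, Matrix.one_apply_ne hbc, mul_zero]
        · rw [zero_mul]
      · simp
    simp only [map_add, map_sum, map_smul, smul_eq_mul] at hzero
    rw [hsum] at hzero
    rw [eq_neg_of_add_eq_zero_left hzero, frakP, Matrix.of_apply, if_neg hac.ne, if_pos hac, hc,
      Nat.add_sub_cancel]

end SatisfiesP

theorem siegelIdxSet_subset_zero (m : ℕ) (k : ℕ → ℕ) (u : ℕ) :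
    siegelIdxSet m k u ⊆ siegelIdxSet m k 0 :=
  fun _ hp => ⟨Nat.zero_le _, hp.2⟩

namespace IsSiegelBasis

/-- The basis of `V` given by condition (3.12) for `u = 0`. -/
noncomputable def toBasis (h : IsSiegelBasis F m k N l) (hm : 0 < m) :
    Module.Basis (siegelIdxSet m k 0) F V :=
  .mk (h 0 hm).1 <| by
    rw [← Set.image_eq_range (fun p : ℕ × ℕ × ℕ => (N ^ p.1) (l p.2.1 p.2.2)), (h 0 hm).2,
      pow_zero, Module.End.one_eq_id, LinearMap.range_id]

theorem toBasis_apply (h : IsSiegelBasis F m k N l) (hm : 0 < m) (p : siegelIdxSet m k 0) :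
    h.toBasis hm p = (N ^ p.1.1) (l p.1.2.1 p.1.2.2) :=
  Module.Basis.mk_apply _ _ p

theorem coord_pow_apply (h : IsSiegelBasis F m k N l) (hm : 0 < m) (e p : siegelIdxSet m k 0) :
    (h.toBasis hm).coord e ((N ^ p.1.1) (l p.1.2.1 p.1.2.2)) = if p = e then 1 else 0 := by
  rw [← toBasis_apply h hm, Module.Basis.coord_apply, Module.Basis.repr_self,
    Finsupp.single_apply]

theorem range_pow_le_ker_coord (h : IsSiegelBasis F m k N l) (hN : N ^ m = 0) (hm : 0 < m)
    {e : siegelIdxSet m k 0} {n : ℕ} (he : e.1.1 < n) :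
    LinearMap.range (N ^ n) ≤ LinearMap.ker ((h.toBasis hm).coord e) := by
  rcases lt_or_ge n m with hn | hn
  · rw [← (h n hn).2, Submodule.span_le]
    rintro _ ⟨p, hp, rfl⟩
    have hpe : (⟨p, siegelIdxSet_subset_zero m k n hp⟩ : siegelIdxSet m k 0) ≠ e := by
      rintro rfl
      exact he.not_ge hp.1
    exact (coord_pow_apply h hm e ⟨p, siegelIdxSet_subset_zero m k n hp⟩).trans (if_neg hpe)
  · rw [pow_eq_zero_of_le hn hN, LinearMap.range_zero]
    exact bot_le

theorem exists_dual (h : IsSiegelBasis F m k N l) (hN : N ^ m = 0) {c : blockIdx m k} {v : ℕ}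
    (hc : c.1.1 = v + 2) :
    ∃ φ : Module.Dual F V,
      (∀ b : blockIdx m k, v + 2 ≤ b.1.1 → φ ((N ^ v) (l b.1.1 b.1.2)) =
        (1 : Matrix (blockIdx m k) (blockIdx m k) F) b c) ∧
      LinearMap.range (N ^ (v + 1)) ≤ LinearMap.ker φ := by
  have hv : v < m := by linarith [blockIdx_fst_le c]
  have hmem (b : blockIdx m k) (hb : v + 2 ≤ b.1.1) :
      (v, b.1.1, b.1.2) ∈ siegelIdxSet m k 0 := by
    obtain ⟨hu, hi⟩ := Finset.mem_sigma.mp b.2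
    exact ⟨Nat.zero_le v, Nat.le_sub_one_of_lt hv, hb, (Finset.mem_Icc.mp hu).2,
      Finset.mem_Icc.mp hi⟩
  refine ⟨(h.toBasis (by omega)).coord ⟨_, hmem c hc.ge⟩, fun b hb => ?_,
    range_pow_le_ker_coord h hN _ v.lt_succ_self⟩
  rw [coord_pow_apply h _ _ ⟨_, hmem b hb⟩, one_apply_blockIdx]
  simp only [Subtype.mk.injEq, Prod.mk.injEq, true_and, ite_and]

end IsSiegelBasis

theorem frakS_mul_frakP_apply_eq_zero (hN : N ^ m = 0) (hbasis : IsSiegelBasis F m k N l)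
    (hP : SatisfiesP m k N l P) {a c : blockIdx m k} (hac : a.1.1 < c.1.1) :
    (frakS m k P * frakP m k P) a c = 0 := by
  have hc_le := blockIdx_fst_le c
  obtain ⟨n, ha⟩ := Nat.exists_eq_add_of_le' (one_le_blockIdx_fst a)
  obtain ⟨t, hc⟩ : ∃ t, c.1.1 = n + t + 2 := ⟨c.1.1 - (n + 2), by omega⟩
  obtain ⟨φ, hdual, hker⟩ := hbasis.exists_dual hN hc
  have hrow := hP.sum_frakS_smul_mem_range ha (by omega)
  have hcol := hP.functional_apply_eq_frakP hc hdual hker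
  rw [Nat.add_right_comm] at hker
  exact dotProduct_eq_zero_of_sum_smul_mem_range hrow hcol hker

end Siegel

/-- Remark 3.24.B of the paper: `𝔓` is the inverse of `𝔖`. -/
theorem stmt_6 {F : Type*} [Field F] {V : Type*} [AddCommGroup V] [Module F V]
    [FiniteDimensional F V]
    (m : ℕ) (hm : 1 ≤ m) (N : Module.End F V) (hN : N ^ m = 0)
    (k : ℕ → ℕ) (l : ℕ → ℕ → V) (hbasis : IsSiegelBasis F m k N l)
    (P : ℕ → ℕ → ℕ → ℕ → ℕ → ℕ → F) (hP : SatisfiesP m k N l P) :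
    frakS m k P * frakP m k P = 1 ∧ frakP m k P * frakS m k P = 1 := by
  have hmul : frakS m k P * frakP m k P = 1 :=
    (frakS_isBlockUnitriangular.mul frakP_isBlockUnitriangular).eq_one_iff.mpr
      fun _ _ => frakS_mul_frakP_apply_eq_zero hN hbasis hP
  exact ⟨hmul, mul_eq_one_comm.mp hmul⟩
end

section
/- Suppose l_1, …, l_r ∈ V are such that the vectors N^i l_j (0 ≤ i ≤ m−1, 1 ≤ j ≤ r) span V over F. Set k_1 := r − c_1. Then k_1 ≥ 0 and the list l_1, …, l_r can be re-indexed (by a bijection) as l_{u,i} (u = 1,…,m+1, i = 1,…,k_u) in such a way that for every u ∈ {0,…,m−1} the vectors N^α l_{β,γ} with u ≤ α ≤ m−1, α+2 ≤ β ≤ m+1, 1 ≤ γ ≤ k_β form an F-basis of the subspace N^u V. (The construction (3.6)–(3.12) of the paper: existence of a Siegel arrangement of the generators.) -/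
/-!
A generator `l j` of height `d` contributes the string `l j, N (l j), …, N ^ (d - 1) (l j)`. The
leading terms of the `N ^ u (l j)` in `V / N ^ (u + 1) V` span `N ^ u V / N ^ (u + 1) V`. Since `N`
maps leading terms at level `u` linearly to those at level `u + 1`, independence at level `u + 1`
pulls back to level `u`. Working downwards from `N ^ m = 0`, one can therefore choose nested sets of
generators whose leading terms are bases of the successive quotients; the height of a generator is
the number of levels at which it is chosen, and lifting these bases through the filtration gives a
basis of each `N ^ u V`. The number of generators of height greater than `u` is
`dim (N ^ u V) - dim (N ^ (u + 1) V) = c_{u+1}`, so exactly `k_{u+1}` of them have height `u`.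
-/

section Strings

variable {ι : Type*} {h : ι → ℕ} {u : ℕ}

/-- The pairs `(α, j)` with `u ≤ α < h j`: the parts in `N ^ u V` of the strings
`l j, N (l j), …, N ^ (h j - 1) (l j)`. -/
def stringIdx (h : ι → ℕ) (u : ℕ) : Set (ℕ × ι) :=
  {p | u ≤ p.1 ∧ p.1 < h p.2}

theorem stringIdx_eq_empty (hu : ∀ j, h j ≤ u) : stringIdx h u = ∅ :=
  Set.eq_empty_of_forall_notMem fun p hp ↦ ((hu p.2).trans hp.1).not_gt hp.2

theorem stringIdx_eq_union (h : ι → ℕ) (u : ℕ) :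
    stringIdx h u = stringIdx h (u + 1) ∪ Prod.mk u '' {j | u < h j} := by
  ext ⟨α, j⟩
  simp only [stringIdx, Set.mem_ofPred_eq, Set.mem_union, Set.mem_image, Prod.mk.injEq,
    existsAndEq]
  grind

theorem disjoint_stringIdx_succ (h : ι → ℕ) (u : ℕ) :
    Disjoint (stringIdx h (u + 1)) (Prod.mk u '' {j | u < h j}) := by
  rw [Set.disjoint_right]
  rintro _ ⟨j, -, rfl⟩ hj
  exact u.lt_irrefl hj.1

variable {K V : Type*} [Semiring K] [AddCommMonoid V] [Module K V]
  {N : Module.End K V} {l : ι → V}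

/-- The vectors `N ^ α (l j)`, indexed by `(α, j)`. -/
def iterateFamily (N : Module.End K V) (l : ι → V) : ℕ × ι → V :=
  fun p ↦ (N ^ p.1) (l p.2)

/-- For every `u`, the vectors `N ^ α (l j)` with `u ≤ α < h j` form a basis of `N ^ u V`. In the
notation of (3.12), `h j = β - 1` when `l j` is arranged as `l_{β,γ}`. -/
structure IsStringBasis (N : Module.End K V) (l : ι → V) (h : ι → ℕ) : Prop where
  linearIndepOn : ∀ u, LinearIndepOn K (iterateFamily N l) (stringIdx h u)
  span_image : ∀ u,
    Submodule.span K (iterateFamily N l '' stringIdx h u) = LinearMap.range (N ^ u)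

theorem span_range_sup_range_eq_top
    (hspan : Submodule.span K (Set.range (iterateFamily N l)) = ⊤) :
    Submodule.span K (Set.range l) ⊔ LinearMap.range N = ⊤ := by
  rw [eq_top_iff, ← hspan, Submodule.span_le]
  rintro _ ⟨⟨_ | α, j⟩, rfl⟩
  · exact Submodule.mem_sup_left (Submodule.subset_span ⟨j, rfl⟩)
  · exact Submodule.mem_sup_right ⟨(N ^ α) (l j), by
      rw [iterateFamily, pow_succ', Module.End.mul_apply]⟩

theorem span_range_sup_range_pow_succ
    (hgen : Submodule.span K (Set.range l) ⊔ LinearMap.range N = ⊤) (u : ℕ) :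
    Submodule.span K (Set.range ((N ^ u) ∘ l)) ⊔ LinearMap.range (N ^ (u + 1)) =
      LinearMap.range (N ^ u) := by
  rw [Set.range_comp, ← Submodule.map_span, pow_succ, Module.End.mul_eq_comp,
    LinearMap.range_comp, ← Submodule.map_sup, hgen, Submodule.map_top]

end Strings

section Layers

variable {K V ι : Type*} [Ring K] [AddCommGroup V] [Module K V]
  {N : Module.End K V} {l : ι → V} {h : ι → ℕ} {u m : ℕ}

/-- The leading term of `N ^ u (l j)`: its class in `V / N ^ (u + 1) V`. -/
def layerClass (N : Module.End K V) (l : ι → V) (u : ℕ) : ι → V ⧸ LinearMap.range (N ^ (u + 1)) :=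
  (LinearMap.range (N ^ (u + 1))).mkQ ∘ (N ^ u) ∘ l

/-- The leading terms at level `u` indexed by `S` form a basis of the span of all leading terms at
level `u`. -/
structure IsLayerBasis (N : Module.End K V) (l : ι → V) (u : ℕ) (S : Set ι) : Prop where
  linearIndepOn : LinearIndepOn K (layerClass N l u) S
  range_subset_span : Set.range (layerClass N l u) ⊆ Submodule.span K (layerClass N l u '' S)

theorem isLayerBasis_empty (hu : N ^ u = 0) : IsLayerBasis N l u ∅ where
  linearIndepOn := linearIndepOn_empty ..
  range_subset_span := by
    rintro _ ⟨j, rfl⟩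
    simp [layerClass, hu]

-- `N` induces a linear map `V / N ^ (u + 1) V → V / N ^ (u + 2) V` carrying leading terms at level
-- `u` to leading terms at level `u + 1`.
theorem linearIndepOn_layerClass_of_succ {S : Set ι}
    (hS : LinearIndepOn K (layerClass N l (u + 1)) S) : LinearIndepOn K (layerClass N l u) S := by
  have hmap : LinearMap.range (N ^ (u + 1)) ≤ (LinearMap.range (N ^ (u + 1 + 1))).comap N := by
    rintro _ ⟨x, rfl⟩
    exact ⟨x, by rw [pow_succ' N (u + 1), Module.End.mul_apply]⟩
  have hcomp : layerClass N l (u + 1) = Submodule.mapQ _ _ N hmap ∘ layerClass N l u := by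
    funext j
    simp [layerClass, pow_succ' N u]
  exact LinearIndepOn.of_comp _ (hcomp ▸ hS)

theorem IsLayerBasis.span_image_sup_range_pow_succ {S : Set ι} (hS : IsLayerBasis N l u S)
    (hgen : Submodule.span K (Set.range l) ⊔ LinearMap.range N = ⊤) :
    Submodule.span K ((N ^ u) ∘ l '' S) ⊔ LinearMap.range (N ^ (u + 1)) =
      LinearMap.range (N ^ u) := by
  rw [← span_range_sup_range_pow_succ hgen u]
  refine le_antisymm (sup_le_sup_right (Submodule.span_mono (Set.image_subset_range _ _)) _)
    (sup_le ?_ le_sup_right)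
  rw [Submodule.span_le, sup_comm, ← Submodule.comap_map_mkQ, Submodule.map_span]
  rintro _ ⟨j, rfl⟩
  rw [← Set.image_comp]
  exact hS.range_subset_span ⟨j, rfl⟩

theorem IsStringBasis.of_isLayerBasis
    (hgen : Submodule.span K (Set.range l) ⊔ LinearMap.range N = ⊤)
    (hN : N ^ m = 0) (hm : ∀ j, h j ≤ m) (hlayer : ∀ u, IsLayerBasis N l u {j | u < h j}) :
    IsStringBasis N l h := by
  suffices ∀ u, LinearIndepOn K (iterateFamily N l) (stringIdx h u) ∧
      Submodule.span K (iterateFamily N l '' stringIdx h u) = LinearMap.range (N ^ u) from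
    ⟨fun u ↦ (this u).1, fun u ↦ (this u).2⟩
  intro u
  rcases le_total m u with hmu | hum
  · simp [stringIdx_eq_empty fun j ↦ (hm j).trans hmu, pow_eq_zero_of_le hmu hN]
  induction hum using Nat.decreasingInduction with
  | self => simp [stringIdx_eq_empty hm, hN]
  | @of_succ u _ ih =>
    obtain ⟨hindep, hspan⟩ := ih
    rw [stringIdx_eq_union]
    constructor
    · refine hindep.union_of_quotient (LinearIndepOn.image_of_comp _ _ ?_)
      rw [hspan]
      exact (hlayer u).linearIndepOn
    · rw [Set.image_union, Submodule.span_union, hspan, Set.image_image, sup_comm]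
      exact (hlayer u).span_image_sup_range_pow_succ hgen

end Layers

section Existence

variable {K V ι : Type*} [DivisionRing K] [AddCommGroup V] [Module K V]
  {N : Module.End K V} {l : ι → V} {u m : ℕ}

theorem IsLayerBasis.exists_superset {T : Set ι} (hT : IsLayerBasis N l (u + 1) T) :
    ∃ S, T ⊆ S ∧ IsLayerBasis N l u S := by
  obtain ⟨S, -, hTS, hspan, hS⟩ := exists_linearIndepOn_extension
    (linearIndepOn_layerClass_of_succ hT.linearIndepOn) (Set.subset_univ T)
  exact ⟨S, hTS, hS, Set.image_univ ▸ hspan⟩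

theorem exists_height_isLayerBasis (hN : N ^ m = 0) (l : ι → V) :
    ∃ h : ι → ℕ, (∀ j, h j ≤ m) ∧ ∀ u, IsLayerBasis N l u {j | u < h j} := by
  suffices hfrom : ∀ u ≤ m, ∃ h : ι → ℕ, (∀ j, h j ≤ m) ∧
      ∀ v ≥ u, IsLayerBasis N l v {j | v < h j} by
    obtain ⟨h, hm, hbasis⟩ := hfrom 0 m.zero_le
    exact ⟨h, hm, fun u ↦ hbasis u u.zero_le⟩
  intro u hum
  induction hum using Nat.decreasingInduction with
  | self =>
    refine ⟨0, fun _ ↦ m.zero_le, fun v hv ↦ ?_⟩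
    simpa using isLayerBasis_empty (l := l) (pow_eq_zero_of_le hv hN)
  | of_succ u hu ih =>
    classical
    obtain ⟨h, hm, hbasis⟩ := ih
    obtain ⟨S, hTS, hS⟩ := (hbasis (u + 1) le_rfl).exists_superset
    have hle (j : ι) (hj : j ∉ S) : h j ≤ u + 1 := not_lt.mp (mt (@hTS j) hj)
    refine ⟨fun j ↦ if j ∈ S then max (h j) (u + 1) else 0, fun j ↦ by grind, fun v hv ↦ ?_⟩
    rcases hv.eq_or_lt with rfl | huv
    · convert hS using 1
      ext j
      by_cases hj : j ∈ S <;> simp [hj]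
    · convert hbasis v huv using 1
      ext j
      by_cases hj : j ∈ S
      · simp [hj, (Nat.succ_le_of_lt huv).not_gt]
      · simp [hj, (hle j hj).trans huv]

theorem exists_isStringBasis (hN : N ^ m = 0)
    (hspan : Submodule.span K (Set.range (iterateFamily N l)) = ⊤) :
    ∃ h : ι → ℕ, (∀ j, h j ≤ m) ∧ IsStringBasis N l h := by
  obtain ⟨h, hm, hlayer⟩ := exists_height_isLayerBasis hN l
  exact ⟨h, hm, .of_isLayerBasis (span_range_sup_range_eq_top hspan) hN hm hlayer⟩

end Existence

section Counting

variable {ι : Type*}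

theorem ncard_fiber_zero [Finite ι] (h : ι → ℕ) :
    {j | h j = 0}.ncard = Nat.card ι - {j | 0 < h j}.ncard := by
  rw [← Set.ncard_compl]
  congr 1
  ext j
  simp

theorem ncard_fiber_succ [Finite ι] (h : ι → ℕ) (u : ℕ) :
    {j | h j = u + 1}.ncard = {j | u < h j}.ncard - {j | u + 1 < h j}.ncard := by
  have hsub : {j | u + 1 < h j} ⊆ {j | u < h j} := fun j hj ↦ u.lt_succ_self.trans hj
  rw [← Set.ncard_sdiff hsub]
  congr 1
  ext j
  simp only [Set.mem_ofPred_eq, Set.mem_sdiff]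
  omega

variable {V : Type*} [AddCommGroup V] {l : ι → V} {h : ι → ℕ}

section StrongRankCondition

variable {R : Type*} [Ring R] [StrongRankCondition R] [Module R V] {N : Module.End R V}

theorem IsStringBasis.ncard_stringIdx (hh : IsStringBasis N l h) (u : ℕ) :
    (stringIdx h u).ncard = Module.finrank R (LinearMap.range (N ^ u)) := by
  rw [← hh.span_image, Set.ncard, ← toENat_rank_span_set (hh.linearIndepOn u)]
  rfl

theorem IsStringBasis.ncard_lt_add_finrank_range [Module.Finite R V]
    (hh : IsStringBasis N l h) (u : ℕ) :
    {j | u < h j}.ncard + Module.finrank R (LinearMap.range (N ^ (u + 1))) =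
      Module.finrank R (LinearMap.range (N ^ u)) := by
  have hfinite : (stringIdx h u).Finite := (hh.linearIndepOn u).linearIndependent.finite
  rw [stringIdx_eq_union] at hfinite
  rw [← hh.ncard_stringIdx, ← hh.ncard_stringIdx, stringIdx_eq_union h u,
    Set.ncard_union_eq (disjoint_stringIdx_succ h u) (hfinite.subset Set.subset_union_left)
      (hfinite.subset Set.subset_union_right),
    Set.ncard_image_of_injective _ (Prod.mk_right_injective u), add_comm]

end StrongRankCondition

theorem IsStringBasis.ncard_lt_eq_finrank_ker_sub {K : Type*} [DivisionRing K] [Module K V]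
    [FiniteDimensional K V] {N : Module.End K V} (hh : IsStringBasis N l h) (u : ℕ) :
    {j | u < h j}.ncard = Module.finrank K (LinearMap.ker (N ^ (u + 1))) -
      Module.finrank K (LinearMap.ker (N ^ u)) := by
  have hlayer := hh.ncard_lt_add_finrank_range u
  have hrank := LinearMap.finrank_range_add_finrank_ker (N ^ u)
  have hrank_succ := LinearMap.finrank_range_add_finrank_ker (N ^ (u + 1))
  omega

end Counting

section Arrangement

variable {ι : Type*} {h : ι → ℕ} {m : ℕ} {k : ℕ → ℕ}

theorem exists_equiv_finsetSigma_of_ncard_fiber_eq {κ : Type*} {τ : κ → Type*} [Finite ι]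
    (s : Finset κ) (t : (b : κ) → Finset (τ b)) (f : ι → κ) (hf : ∀ i, f i ∈ s)
    (hcard : ∀ b ∈ s, {i | f i = b}.ncard = (t b).card) :
    ∃ e : {p // p ∈ s.sigma t} ≃ ι, ∀ p, f (e p) = p.1.1 := by
  have hfiber (b : {b // b ∈ s}) : Nonempty (t b ≃ {i // f i = b}) :=
    Finite.card_eq.mp <| by rw [Nat.card_eq_finsetCard, ← hcard b b.2, ← Nat.card_coe_set_eq]; rfl
  let fiberEquiv (b : {b // b ∈ s}) := (hfiber b).some
  let sigmaEquiv : {p // p ∈ s.sigma t} ≃ (b : {b // b ∈ s}) × t b :=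
    { toFun p := ⟨⟨p.1.1, (Finset.mem_sigma.mp p.2).1⟩, ⟨p.1.2, (Finset.mem_sigma.mp p.2).2⟩⟩
      invFun q := ⟨⟨q.1, q.2⟩, Finset.mem_sigma.mpr ⟨q.1.2, q.2.2⟩⟩
      left_inv _ := rfl
      right_inv _ := rfl }
  exact ⟨(sigmaEquiv.trans (Equiv.sigmaCongrRight fiberEquiv)).trans
    (Equiv.sigmaSubtypeFiberEquiv f (· ∈ s) hf), fun p ↦ (fiberEquiv _ _).2⟩

theorem mem_blockIdx {p : (_ : ℕ) × ℕ} :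
    p ∈ blockIdx m k ↔ (1 ≤ p.1 ∧ p.1 ≤ m + 1) ∧ 1 ≤ p.2 ∧ p.2 ≤ k p.1 := by
  simp only [blockIdx, Finset.mem_sigma, Finset.mem_Icc]

theorem mem_siegelIdxSet {u : ℕ} {p : ℕ × ℕ × ℕ} :
    p ∈ siegelIdxSet m k u ↔
      (u ≤ p.1 ∧ p.1 + 2 ≤ p.2.1) ∧ ⟨p.2.1, p.2.2⟩ ∈ blockIdx m k := by
  simp only [siegelIdxSet, Set.mem_ofPred_eq, mem_blockIdx]
  omega

/-- Replacing a position `(β, γ)` by the generator placed there matches the triples `(α, β, γ)` of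
(3.12) with the pairs `(α, j)` of the string basis, provided `β - 1` is the height of `j`. -/
def siegelIdxSetEquiv (e : {p // p ∈ blockIdx m k} ≃ ι) (he : ∀ p, h (e p) + 1 = p.1.1) (u : ℕ) :
    siegelIdxSet m k u ≃ stringIdx h u where
  toFun p := ⟨(p.1.1, e ⟨⟨p.1.2.1, p.1.2.2⟩, (mem_siegelIdxSet.mp p.2).2⟩), by
    obtain ⟨⟨hu, hαβ⟩, hβγ⟩ := mem_siegelIdxSet.mp p.2
    exact ⟨hu, by have := he ⟨_, hβγ⟩; dsimp only at *; omega⟩⟩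
  invFun q := ⟨(q.1.1, (e.symm q.1.2).1.1, (e.symm q.1.2).1.2), mem_siegelIdxSet.mpr
    ⟨⟨q.2.1, by rw [← he, e.apply_symm_apply]; exact Nat.succ_le_succ q.2.2⟩, (e.symm q.1.2).2⟩⟩
  left_inv p := by simp
  right_inv q := by simp

variable {F V : Type*} [Field F] [AddCommGroup V] [Module F V] {N : Module.End F V} {l : ι → V}

theorem IsStringBasis.isSiegelBasis {l' : ℕ → ℕ → V} (hh : IsStringBasis N l h)
    (e : {p // p ∈ blockIdx m k} ≃ ι) (he : ∀ p, h (e p) + 1 = p.1.1)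
    (hl' : ∀ p : {p // p ∈ blockIdx m k}, l' p.1.1 p.1.2 = l (e p)) :
    IsSiegelBasis F m k N l' := by
  intro u _
  have hfamily : (fun p : siegelIdxSet m k u ↦ (N ^ p.1.1) (l' p.1.2.1 p.1.2.2)) =
      (fun q : stringIdx h u ↦ iterateFamily N l q) ∘ siegelIdxSetEquiv e he u := by
    funext p
    exact congrArg (N ^ p.1.1) (hl' ⟨⟨p.1.2.1, p.1.2.2⟩, (mem_siegelIdxSet.mp p.2).2⟩)
  constructor
  · rw [hfamily, linearIndependent_equiv]
    exact (hh.linearIndepOn u).linearIndependent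
  · rw [Set.image_eq_range, hfamily, EquivLike.range_comp, ← Set.image_eq_range]
    exact hh.span_image u

theorem IsStringBasis.exists_isSiegelBasis [Finite ι] (hh : IsStringBasis N l h) (hm : ∀ j, h j ≤ m)
    (hcard : ∀ u ≤ m, {j | h j = u}.ncard = k (u + 1)) :
    ∃ (l' : ℕ → ℕ → V) (e : {p // p ∈ blockIdx m k} ≃ ι),
      (∀ p : {p // p ∈ blockIdx m k}, l' p.1.1 p.1.2 = l (e p)) ∧ IsSiegelBasis F m k N l' := by
  have hfiber (β : ℕ) (hβ : β ∈ Finset.Icc 1 (m + 1)) :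
      {j | h j + 1 = β}.ncard = (Finset.Icc 1 (k β)).card := by
    obtain ⟨u, rfl⟩ := Nat.exists_eq_add_of_le' (Finset.mem_Icc.mp hβ).1
    simpa using hcard u (by simpa using hβ)
  obtain ⟨e, he⟩ := exists_equiv_finsetSigma_of_ncard_fiber_eq (Finset.Icc 1 (m + 1))
    (fun β ↦ Finset.Icc 1 (k β)) (fun j ↦ h j + 1) (fun j ↦ by simpa using hm j) hfiber
  have hl' (p : {p // p ∈ blockIdx m k}) :
      Function.extend Subtype.val (l ∘ e) 0 ⟨p.1.1, p.1.2⟩ = l (e p) :=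
    Subtype.val_injective.extend_apply _ _ p
  exact ⟨fun β γ ↦ Function.extend Subtype.val (l ∘ e) 0 ⟨β, γ⟩, e, hl', hh.isSiegelBasis e he hl'⟩

end Arrangement

/-- the construction (3.6)–(3.12) of the paper: if `N^i l_j`
(`0 ≤ i ≤ m-1`, `1 ≤ j ≤ r`) span `V`, then `c_1 ≤ r` (i.e. `k_1 = r - c_1 ≥ 0`) and the
list `l_1, …, l_r` can be re-indexed by a bijection as `l'_{u,i}` (`1 ≤ u ≤ m+1`,
`1 ≤ i ≤ k_u`) so that condition (3.12) holds. -/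
theorem stmt_9 {F : Type*} [Field F] {V : Type*} [AddCommGroup V] [Module F V]
    [FiniteDimensional F V]
    (m : ℕ) (hm : 1 ≤ m) (N : Module.End F V) (hN : N ^ m = 0)
    (r : ℕ) (l : Fin r → V)
    (hspan : Submodule.span F {x : V | ∃ (i : ℕ) (j : Fin r), i < m ∧ x = (N ^ i) (l j)} = ⊤)
    (c k : ℕ → ℕ)
    (hc : ∀ j : ℕ, 1 ≤ j → j ≤ m + 1 →
      c j = Module.finrank F (LinearMap.ker (N ^ j)) -
            Module.finrank F (LinearMap.ker (N ^ (j - 1))))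
    (hk2 : ∀ i : ℕ, 2 ≤ i → i ≤ m + 1 → k i = c (i - 1) - c i)
    (hk1 : k 1 = r - c 1) :
    c 1 ≤ r ∧
      ∃ (l' : ℕ → ℕ → V) (e : {p // p ∈ blockIdx m k} ≃ Fin r),
        (∀ p : {p // p ∈ blockIdx m k}, l' p.1.1 p.1.2 = l (e p)) ∧
        IsSiegelBasis F m k N l' := by
  have hgen : Submodule.span F (Set.range (iterateFamily N l)) = ⊤ := by
    refine top_unique (hspan ▸ Submodule.span_mono ?_)
    rintro _ ⟨i, j, -, rfl⟩
    exact ⟨(i, j), rfl⟩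
  obtain ⟨h, hheight, hbasis⟩ := exists_isStringBasis hN hgen
  have hlayer (u : ℕ) (hu : u ≤ m) : {j | u < h j}.ncard = c (u + 1) := by
    rw [hbasis.ncard_lt_eq_finrank_ker_sub, hc (u + 1) (by omega) (by omega), Nat.add_sub_cancel]
  have hfiber (u : ℕ) (hu : u ≤ m) : {j | h j = u}.ncard = k (u + 1) := by
    cases u with
    | zero => rw [ncard_fiber_zero, hlayer 0 hu, hk1, Nat.card_fin]
    | succ u =>
      rw [ncard_fiber_succ, hlayer u (by omega), hlayer (u + 1) hu,
        hk2 (u + 1 + 1) (by omega) (by omega), Nat.add_sub_cancel]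
  refine ⟨?_, hbasis.exists_isSiegelBasis hheight hfiber⟩
  calc c 1 = {j | 0 < h j}.ncard := (hlayer 0 m.zero_le).symm
    _ ≤ Nat.card (Fin r) := Set.ncard_le_card _
    _ = r := Nat.card_fin r
end
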